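/- Let p and q be coprime square-free integers with p ≡ 2 (mod 4), q ≡ 3 (mod 4), p ≥ 10 and q ≥ 10, and let K = ℚ(√p, √q). Then the element α = 7 + (1+√p)² + (1+√q)² of O_K has length exactly 6 (it is a sum of 6 squares in O_K but not of 5); in particular the Pythagoras number of O_K is at least 6. -/

import Mathlib

/-!
Write `s = √p`, `t = √q`. Since `p`, `q` and `pq` are square-free and different from `1`, the
numbers `1, s, t, st` are linearly independent over `ℚ` (`lin4`) and span `K` (`mem_span`).

*Integers of `K`.* An integral polynomial evaluated at `a + bs + ct + dst` has the form
`a' + b's + c't + d'st`, with the same `a', b', c', d'` for all choices of signs of `s` and `t`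
(`eval_conj`). By linear independence, all four conjugates of an integral element are therefore
integral (`isIntegral_conj`). Sums and products of pairs of conjugates lie in `ℚ(√p)`, `ℚ(√q)`,
`ℚ(√(pq))`, whose integers are `ℤ[√n]` because `n ≡ 2, 3 (mod 4)` (`quad_int`). This gives
`a, c ∈ ℤ` and `b = B/2`, `d = D/2` with integers `B ≡ D (mod 2)` (`int_basis`).

*Five squares do not suffice.* Compare coefficients in
`∑ xᵢ² = 9 + p + q + 2s + 2t`. The rational coefficient is so small that all `Dᵢ` vanish (`no_five`); then
`∑ aᵢ² + p ∑ bᵢ² + q ∑ cᵢ² = 9 + p + q`, `∑ aᵢbᵢ = ∑ aᵢcᵢ = 1`, `∑ bᵢcᵢ = 0` over the integers.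
As `p, q ≥ 10`, this forces `∑ bᵢ² = ∑ cᵢ² = 1` and `∑ aᵢ² = 9`. Hence exactly one `bᵢ` and one
`cⱼ` are nonzero, `i ≠ j`, `aᵢ² = aⱼ² = 1`, and the three remaining `aₖ²` sum to `7`, which is
impossible modulo `8` (`no_five_int`). Six squares suffice because `7 = 4 + 1 + 1 + 1`.
-/

/-- The totally real biquadratic field `ℚ(√p, √q)` as a subfield of `ℝ`. -/
noncomputable def biqField (p q : ℕ) : IntermediateField ℚ ℝ :=
  IntermediateField.adjoin ℚ {Real.sqrt p, Real.sqrt q}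

/-- The ring of integers of a subfield `K` of `ℝ`, viewed as the set of elements
of `K` that are integral over `ℤ`. -/
def ringOfInt (K : IntermediateField ℚ ℝ) : Set ℝ :=
  {x : ℝ | x ∈ K ∧ IsIntegral ℤ x}

/-- `α` is a sum of `n` squares of elements of `S`. -/
def SumOfNSquaresIn (S : Set ℝ) (n : ℕ) (α : ℝ) : Prop :=
  ∃ x : Fin n → ℝ, (∀ i, x i ∈ S) ∧ α = ∑ i, x i ^ 2

/-- `α` is a sum of squares of elements of `S`. -/
def IsSumOfSquaresIn (S : Set ℝ) (α : ℝ) : Prop := ∃ n, SumOfNSquaresIn S n α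

/-- `K` is a totally real biquadratic field. -/
def IsBiquadratic (K : IntermediateField ℚ ℝ) : Prop :=
  ∃ p q : ℕ, Squarefree p ∧ Squarefree q ∧ 1 < p ∧ 1 < q ∧ p ≠ q ∧ K = biqField p q

/-! ### Linear independence of `1, √p, √q, √p√q` -/

lemma irrational_sqrt_of_squarefree {n : ℕ} (hn : Squarefree n) (h1 : 1 < n) :
    Irrational (Real.sqrt n) := by
  rw [irrational_sqrt_natCast_iff]
  rintro ⟨m, rfl⟩
  have := Nat.isUnit_iff.1 (hn m (dvd_refl _))
  subst this
  omega

lemma lin2 {z : ℝ} (hz : Irrational z) {u v : ℚ} (h : (u : ℝ) + v * z = 0) : u = 0 ∧ v = 0 := by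
  have hv : v = 0 := by
    by_contra hv
    have hv' : (v : ℝ) ≠ 0 := by exact_mod_cast hv
    apply hz
    refine ⟨-u / v, ?_⟩
    push_cast
    field_simp
    linarith
  subst hv
  simp only [Rat.cast_zero, zero_mul, add_zero] at h
  exact ⟨by exact_mod_cast h, rfl⟩

lemma lin4 {p q : ℕ} {s t : ℝ} (hs2 : s ^ 2 = p) (ht2 : t ^ 2 = q)
    (hs : Irrational s) (ht : Irrational t) (hst : Irrational (s * t))
    {a b c d : ℚ} (h : (a : ℝ) + b * s + c * t + d * (s * t) = 0) :
    a = 0 ∧ b = 0 ∧ c = 0 ∧ d = 0 := by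
  -- Multiplying by the conjugate `c - ds` of the coefficient `c + ds` of `t` gives `U + Vs + Nt = 0`.
  obtain ⟨U, hU⟩ : ∃ U : ℚ, U = a * c - p * b * d := ⟨_, rfl⟩
  obtain ⟨V, hV⟩ : ∃ V : ℚ, V = b * c - a * d := ⟨_, rfl⟩
  obtain ⟨N, hN⟩ : ∃ N : ℚ, N = c ^ 2 - p * d ^ 2 := ⟨_, rfl⟩
  have hUVN : (U : ℝ) + V * s + N * t = 0 := by
    rw [hU, hV, hN]
    push_cast
    linear_combination ((c : ℝ) - d * s) * h + (b * d + d ^ 2 * t) * hs2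
  have hsq : ((U ^ 2 + p * V ^ 2 - q * N ^ 2 : ℚ) : ℝ) + ((2 * U * V : ℚ) : ℝ) * s = 0 := by
    push_cast
    linear_combination ((U : ℝ) + V * s - N * t) * hUVN - (V : ℝ) ^ 2 * hs2 + (N : ℝ) ^ 2 * ht2
  have hUV : U = 0 ∨ V = 0 := by
    have := (lin2 hs hsq).2
    simpa using this
  have hN0 : N = 0 := by
    rcases hUV with h0 | h0
    · refine (lin2 (u := V * p) hst ?_).2
      rw [h0] at hUVN
      push_cast at hUVN ⊢
      linear_combination s * hUVN - (V : ℝ) * hs2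
    · refine (lin2 (u := U) ht ?_).2
      rw [h0] at hUVN
      push_cast at hUVN ⊢
      linear_combination hUVN
  have hcd : c = 0 ∧ d = 0 := by
    have hprod : ((c : ℝ) + d * s) * (c + (-d : ℚ) * s) = 0 := by
      have : (N : ℝ) = 0 := by exact_mod_cast hN0
      rw [hN] at this
      push_cast at this ⊢
      linear_combination this - (d : ℝ) ^ 2 * hs2
    rcases mul_eq_zero.1 hprod with h0 | h0
    · exact lin2 hs h0
    · have := lin2 hs h0
      simpa using this
  obtain ⟨rfl, rfl⟩ := hcd
  have := lin2 hs (u := a) (v := b) (by simpa using h)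
  exact ⟨this.1, this.2, rfl, rfl⟩

lemma mem_span {p q : ℕ} {x : ℝ} (hx : x ∈ biqField p q) :
    ∃ a b c d : ℚ, x = a + b * √p + c * √q + d * (√p * √q) := by
  have hp2 : √(p : ℝ) ^ 2 = p := Real.sq_sqrt (Nat.cast_nonneg _)
  have hq2 : √(q : ℝ) ^ 2 = q := Real.sq_sqrt (Nat.cast_nonneg _)
  have halg : ∀ n : ℕ, IsAlgebraic ℚ (√(n : ℝ)) := fun n => by
    refine IsAlgebraic.of_pow (n := 2) (by norm_num) ?_
    rw [Real.sq_sqrt (Nat.cast_nonneg _)]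
    exact isAlgebraic_natCast n
  have hx' : x ∈ Algebra.adjoin ℚ {√(p : ℝ), √(q : ℝ)} := by
    rw [← IntermediateField.adjoin_toSubalgebra_of_isAlgebraic]
    · exact hx
    · rintro y (rfl | rfl)
      · exact halg p
      · exact halg q
  clear hx
  induction hx' using Algebra.adjoin_induction with
  | mem y hy =>
    rcases hy with rfl | rfl
    · exact ⟨0, 1, 0, 0, by simp⟩
    · exact ⟨0, 0, 1, 0, by simp⟩
  | algebraMap r => exact ⟨r, 0, 0, 0, by simp⟩
  | add y z _ _ hy hz =>
    obtain ⟨a, b, c, d, h⟩ := hy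
    obtain ⟨a', b', c', d', h'⟩ := hz
    refine ⟨a + a', b + b', c + c', d + d', ?_⟩
    rw [h, h']
    push_cast
    ring
  | mul y z _ _ hy hz =>
    obtain ⟨a, b, c, d, h⟩ := hy
    obtain ⟨a', b', c', d', h'⟩ := hz
    refine ⟨a * a' + p * b * b' + q * c * c' + p * q * d * d',
      a * b' + b * a' + q * (c * d' + d * c'), a * c' + c * a' + p * (b * d' + d * b'),
      a * d' + d * a' + b * c' + c * b', ?_⟩
    rw [h, h']
    push_cast
    generalize √(p : ℝ) = s at *
    generalize √(q : ℝ) = t at *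
    rw [← hp2, ← hq2]
    ring

/-! ### Conjugates and integrality -/

/-- Polynomial evaluation commutes with conjugation: the coordinates of `f(a + bs + ct + dst)` do
not depend on the choice of the square roots `s` of `p` and `t` of `q`. -/
lemma eval_conj (p q : ℕ) (a b c d : ℚ) (f : Polynomial ℤ) :
    ∃ a' b' c' d' : ℚ, ∀ s t : ℝ, s ^ 2 = p → t ^ 2 = q →
      Polynomial.aeval ((a : ℝ) + b * s + c * t + d * (s * t)) f =
        a' + b' * s + c' * t + d' * (s * t) := by
  induction f using Polynomial.induction_on with
  | C n => exact ⟨n, 0, 0, 0, fun s t _ _ => by simp⟩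
  | add f g hf hg =>
    obtain ⟨a1, b1, c1, d1, h1⟩ := hf
    obtain ⟨a2, b2, c2, d2, h2⟩ := hg
    refine ⟨a1 + a2, b1 + b2, c1 + c2, d1 + d2, fun s t hs ht => ?_⟩
    rw [map_add, h1 s t hs ht, h2 s t hs ht]
    push_cast
    ring
  | monomial n m h =>
    obtain ⟨a', b', c', d', h⟩ := h
    refine ⟨a * a' + p * b * b' + q * c * c' + p * q * d * d',
      a * b' + b * a' + q * (c * d' + d * c'), a * c' + c * a' + p * (b * d' + d * b'),
      a * d' + d * a' + b * c' + c * b', fun s t hs ht => ?_⟩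
    rw [pow_succ, ← mul_assoc (Polynomial.C m), map_mul, h s t hs ht, Polynomial.aeval_X]
    push_cast
    rw [← hs, ← ht]
    ring

lemma isIntegral_conj {p q : ℕ} {s t : ℝ} (hs2 : s ^ 2 = p) (ht2 : t ^ 2 = q)
    (hs : Irrational s) (ht : Irrational t) (hst : Irrational (s * t))
    {a b c d : ℚ} (h : IsIntegral ℤ ((a : ℝ) + b * s + c * t + d * (s * t)))
    {s' t' : ℝ} (hs' : s' ^ 2 = p) (ht' : t' ^ 2 = q) :
    IsIntegral ℤ ((a : ℝ) + b * s' + c * t' + d * (s' * t')) := by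
  obtain ⟨f, hf, h0⟩ := h
  obtain ⟨a', b', c', d', hev⟩ := eval_conj p q a b c d f
  refine ⟨f, hf, ?_⟩
  rw [← Polynomial.aeval_def] at h0 ⊢
  rw [hev s t hs2 ht2] at h0
  obtain ⟨rfl, rfl, rfl, rfl⟩ := lin4 hs2 ht2 hs ht hst h0
  rw [hev s' t' hs' ht']
  simp

lemma rat_int {u : ℚ} (h : IsIntegral ℤ (u : ℝ)) : ∃ n : ℤ, u = n := by
  have h' : IsIntegral ℤ (algebraMap ℚ ℝ u) := h
  rw [isIntegral_algebraMap_iff (algebraMap ℚ ℝ).injective] at h'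
  obtain ⟨n, hn⟩ := IsIntegrallyClosed.isIntegral_iff.1 h'
  exact ⟨n, by rw [← hn]; simp⟩

lemma rat_int_of_sq {n : ℕ} (hn : Squarefree n) {v : ℚ} {m : ℤ} (h : n * v ^ 2 = m) :
    ∃ k : ℤ, v = k := by
  have hd : (v.den : ℚ) ≠ 0 := by exact_mod_cast v.den_ne_zero
  have h1 : (n : ℤ) * v.num ^ 2 = m * (v.den : ℤ) ^ 2 := by
    have : (n : ℚ) * v.num ^ 2 = m * (v.den : ℚ) ^ 2 := by
      rw [← h]
      nth_rewrite 2 [← Rat.num_div_den v]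
      field_simp
    exact_mod_cast this
  have hc : IsCoprime ((v.den : ℤ) ^ 2) (v.num ^ 2) := by
    apply IsCoprime.pow
    rw [Int.isCoprime_iff_nat_coprime]
    simpa using v.reduced.symm
  have h2 : (v.den : ℤ) ^ 2 ∣ n := hc.dvd_of_dvd_mul_right ⟨m, by rw [h1]; ring⟩
  have h3 : v.den * v.den ∣ n := by
    rw [← sq]
    exact_mod_cast h2
  have h4 := Nat.isUnit_iff.1 (hn _ h3)
  exact ⟨v.num, (Rat.den_eq_one_iff v).1 h4 |>.symm⟩

/-- The integers of `ℚ(√n)` are `ℤ[√n]` when `n ≡ 2, 3 (mod 4)`; integrality is assumed of both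
conjugates. -/
lemma quad_int {n : ℕ} (hn : Squarefree n) (h4 : n % 4 = 2 ∨ n % 4 = 3) {z : ℝ} (hz : z ^ 2 = n)
    {u v : ℚ} (h1 : IsIntegral ℤ ((u : ℝ) + v * z)) (h2 : IsIntegral ℤ ((u : ℝ) - v * z)) :
    (∃ k : ℤ, u = k) ∧ ∃ k : ℤ, v = k := by
  obtain ⟨U, hU⟩ := rat_int (u := 2 * u) (by
    have := h1.add h2
    ring_nf at this ⊢
    push_cast
    exact this)
  obtain ⟨N, hN⟩ := rat_int (u := u ^ 2 - n * v ^ 2) (by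
    have := h1.mul h2
    push_cast
    rw [← hz]
    ring_nf at this ⊢
    exact this)
  obtain ⟨V, hV⟩ := rat_int_of_sq hn (v := 2 * v) (m := U ^ 2 - 4 * N) (by
    push_cast
    rw [← hU, ← hN]
    ring)
  have key : U ^ 2 - n * V ^ 2 = 4 * N := by
    have : (U : ℚ) ^ 2 - n * (V : ℚ) ^ 2 = 4 * N := by
      rw [← hU, ← hV, ← hN]
      ring
    exact_mod_cast this
  have hpar : U % 2 = 0 ∧ V % 2 = 0 := by
    obtain ⟨m, hm⟩ : ∃ m : ℤ, (n : ℤ) = 4 * m + 2 ∨ (n : ℤ) = 4 * m + 3 := ⟨n / 4, by omega⟩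
    rcases Int.emod_two_eq_zero_or_one U with hu | hu <;>
    rcases Int.emod_two_eq_zero_or_one V with hv | hv
    · exact ⟨hu, hv⟩
    all_goals
      exfalso
      obtain ⟨U', hU'⟩ : ∃ U', U' = U / 2 := ⟨_, rfl⟩
      obtain ⟨V', hV'⟩ : ∃ V', V' = V / 2 := ⟨_, rfl⟩
      have e1 : U = 2 * U' + U % 2 := by omega
      have e2 : V = 2 * V' + V % 2 := by omega
      rw [hu] at e1
      rw [hv] at e2
      rw [e1, e2] at key
      rcases hm with hm | hm <;> rw [hm] at key <;> ring_nf at key <;> omega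
  refine ⟨⟨U / 2, ?_⟩, ⟨V / 2, ?_⟩⟩
  · have : U = 2 * (U / 2) := by omega
    have h' : (U : ℚ) = 2 * ((U / 2 : ℤ) : ℚ) := by exact_mod_cast this
    linarith
  · have : V = 2 * (V / 2) := by omega
    have h' : (V : ℚ) = 2 * ((V / 2 : ℤ) : ℚ) := by exact_mod_cast this
    linarith

/-- The parity conditions that the relative norm to `ℚ(√p)` imposes on the doubled coordinates. -/
lemma parity {p q a b c d A B : ℤ} (hp : p % 4 = 2) (hq : q % 4 = 3)
    (h1 : a ^ 2 + p * b ^ 2 - q * c ^ 2 - p * q * d ^ 2 = 4 * A)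
    (h2 : a * b - q * c * d = 2 * B) : a % 2 = 0 ∧ c % 2 = 0 ∧ (b - d) % 2 = 0 := by
  have hP : (p : ZMod 4) = 2 := by
    have := (ZMod.intCast_eq_intCast_iff' p 2 4).2 (by simpa using hp)
    simpa using this
  have hQ : (q : ZMod 4) = 3 := by
    have := (ZMod.intCast_eq_intCast_iff' q 3 4).2 (by simpa using hq)
    simpa using this
  have h1' : (a : ZMod 4) ^ 2 + 2 * (b : ZMod 4) ^ 2 - 3 * (c : ZMod 4) ^ 2
      - 2 * 3 * (d : ZMod 4) ^ 2 = 0 := by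
    have := congrArg (Int.cast : ℤ → ZMod 4) h1
    push_cast at this
    rw [hP, hQ] at this
    rw [this, show (4 : ZMod 4) = 0 from rfl, zero_mul]
  have h2' : 2 * ((a : ZMod 4) * b - 3 * c * d) = 0 := by
    have := congrArg (Int.cast : ℤ → ZMod 4) h2
    push_cast at this
    rw [hQ] at this
    rw [this, ← mul_assoc, show (2 * 2 : ZMod 4) = 0 from rfl, zero_mul]
  have key : ∀ a b c d : ZMod 4, a ^ 2 + 2 * b ^ 2 - 3 * c ^ 2 - 2 * 3 * d ^ 2 = 0 →
      2 * (a * b - 3 * c * d) = 0 → 2 * a = 0 ∧ 2 * c = 0 ∧ 2 * (b - d) = 0 := by decide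
  obtain ⟨ha, hc, hbd⟩ := key _ _ _ _ h1' h2'
  have conv : ∀ x : ℤ, 2 * (x : ZMod 4) = 0 → x % 2 = 0 := fun x hx => by
    have : ((2 * x : ℤ) : ZMod 4) = 0 := by
      push_cast
      exact hx
    have := (ZMod.intCast_zmod_eq_zero_iff_dvd (2 * x) 4).1 this
    push_cast at this
    omega
  refine ⟨conv _ ha, conv _ hc, conv _ ?_⟩
  push_cast
  exact hbd

lemma int_basis {p q : ℕ} (hp : Squarefree p) (hq : Squarefree q) (hpq : Squarefree (p * q))
    (hp4 : p % 4 = 2) (hq4 : q % 4 = 3) {s t : ℝ} (hs2 : s ^ 2 = p) (ht2 : t ^ 2 = q)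
    (hs : Irrational s) (ht : Irrational t) (hst : Irrational (s * t))
    {a b c d : ℚ} (h : IsIntegral ℤ ((a : ℝ) + b * s + c * t + d * (s * t))) :
    ∃ A B C D : ℤ, a = A ∧ b = B / 2 ∧ c = C ∧ d = D / 2 ∧ (B - D) % 2 = 0 := by
  have hs2' : (-s) ^ 2 = p := by rw [neg_sq, hs2]
  have ht2' : (-t) ^ 2 = q := by rw [neg_sq, ht2]
  have h01 := isIntegral_conj hs2 ht2 hs ht hst h hs2 ht2'
  have h10 := isIntegral_conj hs2 ht2 hs ht hst h hs2' ht2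
  have h11 := isIntegral_conj hs2 ht2 hs ht hst h hs2' ht2'
  have hpq4 : (p * q) % 4 = 2 := by rw [Nat.mul_mod, hp4, hq4]
  obtain ⟨⟨a', ha⟩, b', hb⟩ := quad_int hp (.inl hp4) hs2 (u := 2 * a) (v := 2 * b)
    (by have e := h.add h01; push_cast; ring_nf at e ⊢; exact e) (by have e := h10.add h11; push_cast; ring_nf at e ⊢; exact e)
  obtain ⟨-, c', hc⟩ := quad_int hq (.inr hq4) ht2 (u := 2 * a) (v := 2 * c)
    (by have e := h.add h10; push_cast; ring_nf at e ⊢; exact e) (by have e := h01.add h11; push_cast; ring_nf at e ⊢; exact e)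
  obtain ⟨-, d', hd⟩ := quad_int hpq (.inl hpq4) (z := s * t) (by
      rw [mul_pow, hs2, ht2]; push_cast; rfl) (u := 2 * a) (v := 2 * d)
    (by have e := h.add h11; push_cast; ring_nf at e ⊢; exact e) (by have e := h01.add h10; push_cast; ring_nf at e ⊢; exact e)
  obtain ⟨⟨A, hA⟩, B, hB⟩ := quad_int hp (.inl hp4) hs2
    (u := a ^ 2 + p * b ^ 2 - q * c ^ 2 - p * q * d ^ 2) (v := 2 * (a * b - q * c * d))
    (by have e := h.mul h01; push_cast; rw [← hs2, ← ht2]; ring_nf at e ⊢; exact e)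
    (by have e := h10.mul h11; push_cast; rw [← hs2, ← ht2]; ring_nf at e ⊢; exact e)
  have e1 : a' ^ 2 + (p : ℤ) * b' ^ 2 - (q : ℤ) * c' ^ 2 - (p : ℤ) * q * d' ^ 2 = 4 * A := by
    have : (a' : ℚ) ^ 2 + p * (b' : ℚ) ^ 2 - q * (c' : ℚ) ^ 2 - p * q * (d' : ℚ) ^ 2 = 4 * A := by
      rw [← ha, ← hb, ← hc, ← hd, ← hA]
      ring
    exact_mod_cast this
  have e2 : a' * b' - (q : ℤ) * c' * d' = 2 * B := by
    have : (a' : ℚ) * b' - q * c' * d' = 2 * B := by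
      rw [← ha, ← hb, ← hc, ← hd, ← hB]
      ring
    exact_mod_cast this
  obtain ⟨pa, pc, pbd⟩ := parity (by omega) (by omega) e1 e2
  obtain ⟨A', rfl⟩ : ∃ A', a' = 2 * A' := ⟨a' / 2, by omega⟩
  obtain ⟨C', rfl⟩ : ∃ C', c' = 2 * C' := ⟨c' / 2, by omega⟩
  push_cast at ha hc
  exact ⟨A', b', C', d', by linarith, by linarith, by linarith, by linarith, pbd⟩

/-! ### The Diophantine system -/

lemma three_sq_ne_seven (x y z : ℤ) : x ^ 2 + y ^ 2 + z ^ 2 ≠ 7 := by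
  intro h
  have key : ∀ x y z : ZMod 8, x ^ 2 + y ^ 2 + z ^ 2 ≠ 7 := by decide
  apply key x y z
  have := congrArg (Int.cast : ℤ → ZMod 8) h
  push_cast at this
  exact this

lemma single_of_sum_sq {n : ℕ} {b : Fin n → ℤ} (h : ∑ i, b i ^ 2 = 1) :
    ∃ i, b i ^ 2 = 1 ∧ ∀ k, k ≠ i → b k = 0 := by
  have hex : ∃ i, b i ≠ 0 := by
    by_contra! hb
    simp [hb] at h
  obtain ⟨i, hi⟩ := hex
  have hi1 : 1 ≤ b i ^ 2 := by
    have := sq_nonneg (b i)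
    have : b i ^ 2 ≠ 0 := pow_ne_zero 2 hi
    omega
  have hsum := Finset.add_sum_erase Finset.univ (fun i => b i ^ 2) (Finset.mem_univ i)
  have hnn : 0 ≤ ∑ k ∈ Finset.univ.erase i, b k ^ 2 := Finset.sum_nonneg fun k _ => sq_nonneg _
  have h0 : ∑ k ∈ Finset.univ.erase i, b k ^ 2 = 0 := by omega
  refine ⟨i, by omega, fun k hk => ?_⟩
  have := (Finset.sum_eq_zero_iff_of_nonneg fun k _ => sq_nonneg (b k)).1 h0 k (by simp [hk])
  simpa using this

lemma no_five_int {p q : ℤ} (hp : 10 ≤ p) (hq : 10 ≤ q) (a b c : Fin 5 → ℤ)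
    (h0 : ∑ i, a i ^ 2 + p * ∑ i, b i ^ 2 + q * ∑ i, c i ^ 2 = 9 + p + q)
    (h1 : ∑ i, a i * b i = 1) (h2 : ∑ i, a i * c i = 1) (h3 : ∑ i, b i * c i = 0) : False := by
  have hpos : ∀ e : Fin 5 → ℤ, ∑ i, a i * e i = 1 → 1 ≤ ∑ i, e i ^ 2 := by
    intro e he
    by_contra! hlt
    have hz : ∑ i, e i ^ 2 = 0 :=
      le_antisymm (by omega) (Finset.sum_nonneg fun k _ => sq_nonneg _)
    have hz' := (Finset.sum_eq_zero_iff_of_nonneg fun k _ => sq_nonneg (e k)).1 hz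
    have : ∀ i, e i = 0 := fun i => by simpa using hz' i (Finset.mem_univ i)
    simp [this] at he
  have hB := hpos b h1
  have hC := hpos c h2
  have hA : 0 ≤ ∑ i, a i ^ 2 := Finset.sum_nonneg fun k _ => sq_nonneg _
  have hB1 : ∑ i, b i ^ 2 = 1 := by nlinarith
  have hC1 : ∑ i, c i ^ 2 = 1 := by nlinarith
  have hA9 : ∑ i, a i ^ 2 = 9 := by rw [hB1, hC1] at h0; linarith
  obtain ⟨i, hi, hbi⟩ := single_of_sum_sq hB1
  obtain ⟨j, hj, hcj⟩ := single_of_sum_sq hC1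
  rw [Finset.sum_eq_single i (fun k _ hk => by rw [hbi k hk, mul_zero]) (by simp)] at h1
  rw [Finset.sum_eq_single j (fun k _ hk => by rw [hcj k hk, mul_zero]) (by simp)] at h2
  rw [Finset.sum_eq_single i (fun k _ hk => by rw [hbi k hk, zero_mul]) (by simp)] at h3
  have hij : i ≠ j := by
    rintro rfl
    rcases mul_eq_zero.1 h3 with h | h
    · simp [h] at hi
    · simp [h] at hj
  have hai : a i ^ 2 = 1 := by
    have : (a i * b i) ^ 2 = 1 := by rw [h1]; rfl
    rw [mul_pow, hi, mul_one] at this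
    exact this
  have haj : a j ^ 2 = 1 := by
    have : (a j * c j) ^ 2 = 1 := by rw [h2]; rfl
    rw [mul_pow, hj, mul_one] at this
    exact this
  -- Three indices remain besides `i` and `j`.
  have hperm : ∀ i j : Fin 5, i ≠ j → ∃ k l m : Fin 5,
      [i, j, k, l, m].Nodup ∧ (Finset.univ : Finset (Fin 5)) = {i, j, k, l, m} := by decide
  obtain ⟨k, l, m, hnd, hu⟩ := hperm i j hij
  have hsum : ∑ x, a x ^ 2 = a i ^ 2 + (a j ^ 2 + (a k ^ 2 + (a l ^ 2 + a m ^ 2))) := by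
    simp only [List.nodup_cons, List.mem_cons, List.not_mem_nil, or_false, not_or] at hnd
    rw [hu, Finset.sum_insert, Finset.sum_insert, Finset.sum_insert, Finset.sum_insert,
      Finset.sum_singleton] <;> simp <;> tauto
  exact three_sq_ne_seven (a k) (a l) (a m) (by omega)

/-- The system obtained by comparing coefficients, in the coordinates `a, B/2, c, D/2` with
`B ≡ D (mod 2)`, has no solution. -/
lemma no_five {p q : ℤ} (hp : 10 ≤ p) (hq : 11 ≤ q) (a B c D : Fin 5 → ℤ)
    (hpar : ∀ i, (B i - D i) % 2 = 0)
    (h0 : ∑ i, (4 * a i ^ 2 + p * B i ^ 2 + 4 * q * c i ^ 2 + p * q * D i ^ 2) = 4 * (9 + p + q))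
    (h1 : ∑ i, (a i * B i + q * (c i * D i)) = 2)
    (h2 : ∑ i, (4 * (a i * c i) + p * (B i * D i)) = 4)
    (h3 : ∑ i, (a i * D i + B i * c i) = 0) : False := by
  by_cases hD : ∀ i, D i = 0
  · have hB : ∀ i, ∃ b, B i = 2 * b := fun i => ⟨B i / 2, by have := hpar i; rw [hD i] at this; omega⟩
    choose b hb using hB
    refine no_five_int (q := q) hp (by omega) a b c ?_ ?_ ?_ ?_
    · simp only [hD, hb] at h0
      simp only [Finset.mul_sum, ← Finset.sum_add_distrib]
      have : ∑ i, 4 * (a i ^ 2 + p * b i ^ 2 + q * c i ^ 2) = 4 * (9 + p + q) :=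
        (Finset.sum_congr rfl fun i _ => by ring).trans h0
      rw [← Finset.mul_sum] at this
      linarith
    · simp only [hD, hb] at h1
      have : ∑ i, 2 * (a i * b i) = 2 :=
        (Finset.sum_congr rfl fun i _ => by ring).trans h1
      rw [← Finset.mul_sum] at this
      omega
    · simp only [hD, mul_zero, add_zero, ← Finset.mul_sum] at h2
      omega
    · simp only [hD, hb] at h3
      have : ∑ i, 2 * (b i * c i) = 0 :=
        (Finset.sum_congr rfl fun i _ => by ring).trans h3
      rw [← Finset.mul_sum] at this
      omega
  · push Not at hD
    obtain ⟨j, hj⟩ := hD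
    have hsq : ∀ x : ℤ, x ≠ 0 → 1 ≤ x ^ 2 := fun x hx => by
      have := sq_nonneg x
      have : x ^ 2 ≠ 0 := pow_ne_zero 2 hx
      omega
    have hBD : p + p * q ≤ ∑ i, (p * B i ^ 2 + p * q * D i ^ 2) := by
      have hle : p * B j ^ 2 + p * q * D j ^ 2 ≤ ∑ i, (p * B i ^ 2 + p * q * D i ^ 2) :=
        Finset.single_le_sum (f := fun i => p * B i ^ 2 + p * q * D i ^ 2)
          (fun i _ => by positivity) (Finset.mem_univ j)
      refine le_trans ?_ hle
      by_cases hBj : B j = 0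
      -- If `B j = 0`, then `D j` is even, so `D j ^ 2 ≥ 4`.
      · obtain ⟨e, he⟩ : ∃ e, D j = 2 * e := ⟨D j / 2, by have := hpar j; omega⟩
        have := hsq e (by rintro rfl; omega)
        rw [hBj, he]
        have hpq : 0 ≤ p * q := by positivity
        nlinarith
      · have e1 := hsq _ hBj
        have e2 := hsq _ hj
        have hpq : 0 ≤ p * q := by positivity
        nlinarith
    -- The `√p`-coefficient shows that not all `a i` and `c i` vanish.
    have hac : 4 ≤ ∑ i, (4 * a i ^ 2 + 4 * q * c i ^ 2) := by
      have hex : ∃ i, a i ≠ 0 ∨ c i ≠ 0 := by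
        by_contra! hh
        simp [hh] at h1
      obtain ⟨i, hi⟩ := hex
      have hle : 4 * a i ^ 2 + 4 * q * c i ^ 2 ≤ ∑ i, (4 * a i ^ 2 + 4 * q * c i ^ 2) :=
        Finset.single_le_sum (f := fun i => 4 * a i ^ 2 + 4 * q * c i ^ 2)
          (fun i _ => by positivity) (Finset.mem_univ i)
      refine le_trans ?_ hle
      have n1 := sq_nonneg (a i)
      have n2 := sq_nonneg (c i)
      rcases hi with hi | hi
      · have := hsq _ hi
        nlinarith
      · have := hsq _ hi
        nlinarith
    have htot : ∑ i, (p * B i ^ 2 + p * q * D i ^ 2) + ∑ i, (4 * a i ^ 2 + 4 * q * c i ^ 2)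
        = 4 * (9 + p + q) := by
      rw [← h0, ← Finset.sum_add_distrib]
      exact Finset.sum_congr rfl fun i _ => by ring
    -- `(p - 4) * (q - 3) ≤ 44` contradicts `p ≥ 10`, `q ≥ 11`.
    nlinarith [mul_nonneg (sub_nonneg.2 hp) (sub_nonneg.2 hq)]

/-- For coprime squarefree `p ≡ 2`, `q ≡ 3 (mod 4)` with `p, q ≥ 10`
and `K = ℚ(√p, √q)`, the element `7 + (1+√p)² + (1+√q)²` is a sum of `6` squares in
`O_K` but not of `5`; in particular the Pythagoras number of `O_K` is at least `6`. -/
theorem length_six_element_B1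
    (p q : ℕ) (hp : Squarefree p) (hq : Squarefree q) (hcop : Nat.Coprime p q)
    (hp4 : p % 4 = 2) (hq4 : q % 4 = 3) (hp10 : 10 ≤ p) (hq10 : 10 ≤ q) :
    SumOfNSquaresIn (ringOfInt (biqField p q)) 6
      (7 + (1 + Real.sqrt p) ^ 2 + (1 + Real.sqrt q) ^ 2) ∧
    ¬ SumOfNSquaresIn (ringOfInt (biqField p q)) 5
      (7 + (1 + Real.sqrt p) ^ 2 + (1 + Real.sqrt q) ^ 2) ∧
    (∃ α ∈ ringOfInt (biqField p q), IsSumOfSquaresIn (ringOfInt (biqField p q)) α ∧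
      ¬ SumOfNSquaresIn (ringOfInt (biqField p q)) 5 α) := by
  have hpq : Squarefree (p * q) := (Nat.squarefree_mul hcop).2 ⟨hp, hq⟩
  have hs2 : √(p : ℝ) ^ 2 = p := Real.sq_sqrt (Nat.cast_nonneg _)
  have ht2 : √(q : ℝ) ^ 2 = q := Real.sq_sqrt (Nat.cast_nonneg _)
  have hs := irrational_sqrt_of_squarefree hp (by omega)
  have ht := irrational_sqrt_of_squarefree hq (by omega)
  have hst : Irrational (√(p : ℝ) * √(q : ℝ)) := by
    have := irrational_sqrt_of_squarefree hpq (by nlinarith)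
    rwa [Nat.cast_mul, Real.sqrt_mul (Nat.cast_nonneg _)] at this
  have hsK : √(p : ℝ) ∈ biqField p q := IntermediateField.subset_adjoin ℚ _ (by simp)
  have htK : √(q : ℝ) ∈ biqField p q := IntermediateField.subset_adjoin ℚ _ (by simp)
  have hint : ∀ n : ℕ, IsIntegral ℤ (√(n : ℝ)) := fun n => by
    refine IsIntegral.of_pow (n := 2) (by norm_num) ?_
    rw [Real.sq_sqrt (Nat.cast_nonneg _)]
    exact isIntegral_algebraMap (x := (n : ℤ))
  have h1O : (1 : ℝ) ∈ ringOfInt (biqField p q) := ⟨one_mem _, isIntegral_one⟩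
  have h2O : (2 : ℝ) ∈ ringOfInt (biqField p q) := by
    rw [← one_add_one_eq_two]
    exact ⟨add_mem h1O.1 h1O.1, h1O.2.add h1O.2⟩
  have hsO : 1 + √(p : ℝ) ∈ ringOfInt (biqField p q) :=
    ⟨add_mem h1O.1 hsK, h1O.2.add (hint p)⟩
  have htO : 1 + √(q : ℝ) ∈ ringOfInt (biqField p q) :=
    ⟨add_mem h1O.1 htK, h1O.2.add (hint q)⟩
  have h6 : SumOfNSquaresIn (ringOfInt (biqField p q)) 6
      (7 + (1 + Real.sqrt p) ^ 2 + (1 + Real.sqrt q) ^ 2) := by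
    refine ⟨![2, 1, 1, 1, 1 + √p, 1 + √q], ?_, ?_⟩
    · intro i
      fin_cases i <;> simp <;> assumption
    · rw [Fin.sum_univ_six]
      simp
      ring
  have h5 : ¬ SumOfNSquaresIn (ringOfInt (biqField p q)) 5
      (7 + (1 + Real.sqrt p) ^ 2 + (1 + Real.sqrt q) ^ 2) := by
    rintro ⟨x, hx, hsum⟩
    have hcoord : ∀ i, ∃ A B C D : ℤ, x i = (A : ℝ) + (B : ℝ) / 2 * √p + C * √q
        + (D : ℝ) / 2 * (√p * √q) ∧ (B - D) % 2 = 0 := by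
      intro i
      obtain ⟨a, b, c, d, h⟩ := mem_span (hx i).1
      have hi := (hx i).2
      rw [h] at hi
      obtain ⟨A, B, C, D, rfl, rfl, rfl, rfl, hBD⟩ :=
        int_basis hp hq hpq hp4 hq4 hs2 ht2 hs ht hst hi
      refine ⟨A, B, C, D, ?_, hBD⟩
      rw [h]
      push_cast
      rfl
    choose A B C D hxi hpar using hcoord
    have hlin := lin4 (p := p) (q := q) hs2 ht2 hs ht hst
      (a := ((∑ i, (4 * A i ^ 2 + p * B i ^ 2 + 4 * q * C i ^ 2 + p * q * D i ^ 2)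
        - 4 * (9 + p + q) : ℤ) : ℚ))
      (b := ((4 * ∑ i, (A i * B i + q * (C i * D i)) - 8 : ℤ) : ℚ))
      (c := ((2 * ∑ i, (4 * (A i * C i) + p * (B i * D i)) - 8 : ℤ) : ℚ))
      (d := ((4 * ∑ i, (A i * D i + B i * C i) : ℤ) : ℚ)) (by
        simp only [hxi, Fin.sum_univ_five] at hsum
        simp only [Fin.sum_univ_five]
        push_cast
        generalize √(p : ℝ) = s at *
        generalize √(q : ℝ) = t at *
        rw [← hs2, ← ht2]
        linear_combination (-4) * hsum)
    simp only [Int.cast_eq_zero] at hlin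
    obtain ⟨e0, e1, e2, e3⟩ := hlin
    exact no_five (p := p) (q := q) (by omega) (by omega) A B C D hpar
      (by linarith) (by linarith) (by linarith) (by linarith)
  refine ⟨h6, h5, _, ?_, ⟨6, h6⟩, h5⟩
  have h7 : IsIntegral ℤ (7 : ℝ) := isIntegral_algebraMap (x := (7 : ℤ))
  exact ⟨add_mem (add_mem (ofNat_mem _ 7) (pow_mem hsO.1 2)) (pow_mem htO.1 2),
    (h7.add (hsO.2.pow 2)).add (htO.2.pow 2)⟩
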